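/- For every real ε > 0 there exists r₀ such that for all integers r ≥ r₀ one has (1 − ε) · r ≤ f_3(r, {𝒞_2^{(3)}, 𝒞_4^{(3)}}) ≤ (1 + ε) · r. -/

import Mathlib

/-- An `m`-uniform edge set: every edge has exactly `m` vertices. -/
def IsUniform (m : ℕ) {n : ℕ} (E : Finset (Finset (Fin n))) : Prop :=
  ∀ e ∈ E, e.card = m

/-- The hypergraph with edge set `GE` contains a subhypergraph isomorphic to the
hypergraph with edge set `HE`: there is an injection of vertices sending every edge
of `HE` to an edge of `GE`. -/
def HypContains {n N : ℕ} (HE : Finset (Finset (Fin n))) (GE : Finset (Finset (Fin N))) : Prop :=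
  ∃ f : Fin n → Fin N, Function.Injective f ∧ ∀ e ∈ HE, e.image f ∈ GE

/-- The hypergraph with edge set `GE` is an `(r,k)`-hypergraph (`m`-uniform setting):
its vertex set can be partitioned into `r` parts of size at most `k` so that for every
`m`-element set of parts there is an edge meeting each of those parts in exactly one vertex. -/
def IsRKHyper {N : ℕ} (GE : Finset (Finset (Fin N))) (m r k : ℕ) : Prop :=
  ∃ P : Fin r → Finset (Fin N),
    (∀ v : Fin N, ∃! i, v ∈ P i) ∧
    (∀ i, (P i).card ≤ k) ∧
    ∀ S : Finset (Fin r), S.card = m → ∃ e ∈ GE, ∀ i ∈ S, (e ∩ P i).card = 1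

/-- A hypergraph: a number of vertices together with an edge set. -/
abbrev Hyp := (n : ℕ) × Finset (Finset (Fin n))

/-- `f_m(r, ℋ)`: the minimum `k` for which there is an `ℋ`-free `m`-uniform
`(r,k)`-hypergraph. -/
noncomputable def fHyper (m r : ℕ) (ℋ : Set Hyp) : ℕ :=
  sInf {k | ∃ (N : ℕ) (GE : Finset (Finset (Fin N))),
    IsUniform m GE ∧ (∀ H ∈ ℋ, ¬ HypContains H.2 GE) ∧ IsRKHyper GE m r k}

/-- A hypergraph is a Berge cycle of length `ℓ` (in the `m`-uniform setting) if it is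
`m`-uniform and there are distinct vertices `v_1,…,v_ℓ` and distinct edges `e_1,…,e_ℓ`
(the edges of the hypergraph being exactly `e_1,…,e_ℓ`) with `{v_i, v_{i+1}} ⊆ e_i`
for all `i`, indices modulo `ℓ`. -/
def IsBergeCycle (m ℓ : ℕ) (H : Hyp) : Prop :=
  IsUniform m H.2 ∧
  ∃ (v : ZMod ℓ → Fin H.1) (e : ZMod ℓ → Finset (Fin H.1)),
    Function.Injective v ∧ Function.Injective e ∧
    (∀ i, e i ∈ H.2) ∧ (∀ b ∈ H.2, ∃ i, e i = b) ∧
    ∀ i, ({v i, v (i + 1)} : Finset (Fin H.1)) ⊆ e i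

/-- `𝒞_ℓ^{(m)}`: the family of all `m`-uniform hypergraphs that are Berge cycles
of length `ℓ`. -/
def bergeCycles (m ℓ : ℕ) : Set Hyp := {H | IsBergeCycle m ℓ H}

/-!
*Lower bound.* In a 3-uniform hypergraph with `N` vertices and edge set `E` without Berge cycles of
length 2 or 4, count the paths `a, w, b` whose vertices do not lie in one edge. All but `O(|E|)`
pairs `(a, b)` have at most one such midpoint `w`, since two midpoints would close up to a Berge
4-cycle, unless they lie in an edge together with `a` or `b`. Thus `4 ∑ deg(w)² ≤ N² + 36 |E|`, and
Cauchy–Schwarz gives `36 |E|² ≤ N (N² + 36 |E|)`. With `|E| ≥ r.choose 3` and `N ≤ r k` this forces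
`r ≤ k + 3`.

*Upper bound.* The triangles of a graph without 4-cycles form a hypergraph without Berge cycles of
length 2 and 4. Over a field of odd order `q ≥ r`, join `(i, x)` and `(j, y)`, where `i ≠ j`, when
`x + y = tᵢ tⱼ` for distinct scalars `tᵢ`: this graph has no 4-cycle, and any three of its parts
`{i} × F` span a triangle because a linear system with determinant `±2` is solvable. So
`f_3(r, ·) ≤ q`.

*Odd prime powers in `[r, (1 + ε) r]`.* The Dirichlet series of `Λ` restricted to odd integers
extends continuously to `1 ≤ re s` after subtracting its pole at `1`. As in the proof of the
Wiener–Ikehara theorem, `∑ Λ(n) n⁻¹ ŵ(log n - u)` therefore has, after regularization, a limit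
tending to `w(0)` as `u → ∞`, for every compactly supported Schwartz function `w`. Choosing `w` with
`w(0) > 0` and `ŵ ≤ 0` outside `(-η, η)` makes some term with `|log n - u| < η` positive.
-/

section PrimePowers

open ArithmeticFunction.vonMangoldt Filter FourierTransform MeasureTheory Real SchwartzMap Topology
open scoped ComplexOrder ContDiff Convolution

lemma fourier_im_eq_zero_of_even {f : ℝ → ℝ} (hf : f.Even) (t : ℝ) :
    (𝓕 (fun x ↦ (f x : ℂ)) t).im = 0 := by
  rw [← Complex.conj_eq_iff_im, Real.fourier_real_eq_integral_exp_smul, ← integral_conj,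
    ← integral_neg_eq_self]
  congr 1 with x
  simp [hf x, ← Complex.exp_conj, Complex.conj_ofNat]

lemma fourier_derivCLM_derivCLM (f : 𝓢(ℝ, ℂ)) (t : ℝ) :
    𝓕 (derivCLM ℂ ℂ (derivCLM ℂ ℂ f)) t = -((2 * π * t) ^ 2 : ℝ) * 𝓕 f t := by
  have fourier_derivCLM (h : 𝓢(ℝ, ℂ)) : 𝓕 (derivCLM ℂ ℂ h) t = 2 * π * Complex.I * t * 𝓕 h t :=
    congr_fun (Real.fourier_deriv h.integrable h.differentiable (derivCLM ℂ ℂ h).integrable) t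
  rw [fourier_derivCLM, fourier_derivCLM]
  push_cast
  linear_combination (2 * π * t) ^ 2 * 𝓕 f t * Complex.I_sq

-- The self-convolution of a real even bump function has the square of a real function as transform.
lemma exists_schwartzMap_fourier_nonneg :
    ∃ g : 𝓢(ℝ, ℂ), HasCompactSupport g ∧ 0 < (g 0).re ∧ ∀ t, 0 ≤ (𝓕 g t).re := by
  let b : ContDiffBump (0 : ℝ) := ⟨1, 2, one_pos, one_lt_two⟩
  have b_even : Function.Even (b : ℝ → ℝ) := fun x ↦ b.neg x
  have v_supp : HasCompactSupport fun x ↦ (b x : ℂ) :=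
    b.hasCompactSupport.comp_left Complex.ofReal_zero
  let v : 𝓢(ℝ, ℂ) := v_supp.toSchwartzMap (Complex.ofRealCLM.contDiff.comp b.contDiff)
  have hv : ⇑v = fun x ↦ (b x : ℂ) := rfl
  have mul_apply := SchwartzMap.convolution_apply (.mul ℂ ℂ) v v
  refine ⟨SchwartzMap.convolution (.mul ℂ ℂ) v v, ?_, ?_, fun t ↦ ?_⟩
  · rw [funext mul_apply]
    exact v_supp.convolution (L := .mul ℂ ℂ) v_supp
  · have b_sq_pos : 0 < ∫ x, b x * b x :=
      (b.continuous.mul b.continuous).integral_pos_of_hasCompactSupport_nonneg_nonzero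
        b.hasCompactSupport.mul_left (fun x ↦ mul_self_nonneg (b x)) (x := 0)
        (by simp [b.one_of_mem_closedBall (Metric.mem_closedBall_self b.rIn_pos.le)])
    have conv_zero : (v ⋆[.mul ℂ ℂ] v) 0 = ((∫ x, b x * b x : ℝ) : ℂ) := by
      simp [convolution_def, hv, b.neg, ← integral_complex_ofReal]
    rwa [mul_apply, conv_zero, Complex.ofReal_re]
  · rw [fourier_convolution_apply,
      Real.fourier_mul_convolution_eq v.integrable v.integrable, Complex.mul_re,
      hv, fourier_im_eq_zero_of_even b_even]
    nlinarith

-- If `ĝ ≥ 0`, then `g + c g''` has transform `(1 - c (2πt)²) ĝ(t)`, which is `≤ 0` for large `|t|`.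
lemma exists_schwartzMap_fourier_eventually_nonpos :
    ∃ (w : 𝓢(ℝ, ℂ)) (T : ℝ), HasCompactSupport w ∧ 0 < (w 0).re ∧ 0 < T ∧
      ∀ t, T ≤ |t| → (𝓕 w t).re ≤ 0 := by
  obtain ⟨g, g_supp, g_zero, g_fourier⟩ := exists_schwartzMap_fourier_nonneg
  let g'' := derivCLM ℂ ℂ (derivCLM ℂ ℂ g)
  let c : ℝ := (g 0).re / (2 * (|(g'' 0).re| + 1))
  have c_pos : 0 < c := by positivity
  refine ⟨g + (c : ℂ) • g'', (√c)⁻¹, ?_, ?_, by positivity, fun t ht ↦ ?_⟩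
  · exact g_supp.add (g_supp.deriv.deriv.comp_left (g := fun z ↦ (c : ℂ) • z) (smul_zero _))
  · have : c * |(g'' 0).re| < (g 0).re := by
      rw [div_mul_eq_mul_div, div_lt_iff₀ (by positivity)]
      nlinarith [abs_nonneg (g'' 0).re]
    have : -(c * |(g'' 0).re|) ≤ c * (g'' 0).re := by
      nlinarith [neg_abs_le (g'' 0).re]
    simp only [add_apply, smul_apply, Complex.add_re, smul_eq_mul,
      Complex.re_ofReal_mul]
    linarith
  · have one_le : 1 ≤ c * (2 * π * t) ^ 2 := by
      have one_le_ct : 1 ≤ c * t ^ 2 := by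
        have := (inv_le_iff_one_le_mul₀ (by positivity)).1 ht
        nlinarith [Real.sq_sqrt c_pos.le, sq_abs t, Real.sqrt_nonneg c, abs_nonneg t]
      nlinarith [Real.pi_gt_three, mul_pow (2 * π) t 2]
    have : 𝓕 (g + (c : ℂ) • g'') t = ((1 - c * (2 * π * t) ^ 2 : ℝ) : ℂ) * 𝓕 g t := by
      rw [FourierAdd.fourier_add, FourierTransform.fourier_smul, add_apply, smul_apply,
        fourier_derivCLM_derivCLM]
      push_cast
      ring
    rw [this, Complex.re_ofReal_mul]
    exact mul_nonpos_of_nonpos_of_nonneg (by linarith) (g_fourier t)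

lemma exists_schwartzMap_fourier_rescaled {w : 𝓢(ℝ, ℂ)} (w_supp : HasCompactSupport w)
    {c : ℝ} (hc : 0 < c) :
    ∃ w' : 𝓢(ℝ, ℂ), HasCompactSupport w' ∧ w' 0 = w 0 ∧ ∀ t, 𝓕 w' t = c * 𝓕 w (c * t) := by
  let φ : ℝ ≃L[ℝ] ℝ := .unitsEquivAut ℝ (.mk0 c⁻¹ (inv_pos.2 hc).ne')
  refine ⟨compCLMOfContinuousLinearEquiv ℂ φ w,
    w_supp.comp_homeomorph φ.toHomeomorph, by simp, fun t ↦ ?_⟩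
  have scaled := Measure.integral_comp_div (fun y ↦ 𝐞 (-(y * (c * t))) • w y) c
  rw [abs_of_pos hc, Complex.real_smul, ← Real.fourier_real_eq] at scaled
  rw [fourier_coe, fourier_coe, ← scaled, Real.fourier_real_eq]
  congr 1 with x
  have arg_eq : x / c * (c * t) = x * t := by field_simp
  rw [arg_eq]
  rfl

lemma exists_schwartzMap_fourier_nonpos_of_le_abs {η : ℝ} (hη : 0 < η) :
    ∃ w : 𝓢(ℝ, ℂ), HasCompactSupport w ∧ 0 < (w 0).re ∧ ∀ t, η ≤ |t| → (𝓕 w t).re ≤ 0 := by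
  obtain ⟨w, T, w_supp, w_zero, T_pos, w_fourier⟩ := exists_schwartzMap_fourier_eventually_nonpos
  obtain ⟨w', w'_supp, w'_zero, w'_fourier⟩ :=
    exists_schwartzMap_fourier_rescaled w_supp (div_pos T_pos hη)
  refine ⟨w', w'_supp, w'_zero ▸ w_zero, fun t ht ↦ ?_⟩
  have T_le : T ≤ |T / η * t| := by
    rw [abs_mul, abs_of_pos (div_pos T_pos hη), div_mul_eq_mul_div, le_div_iff₀ hη]
    gcongr
  rw [w'_fourier, Complex.re_ofReal_mul]
  exact mul_nonpos_of_nonneg_of_nonpos (by positivity) (w_fourier _ T_le)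

lemma integral_mul_fourier_comp {X : Type*} [MeasurableSpace X] {ν : Measure X} [SFinite ν]
    {c : X → ℂ} (hc : Integrable c ν) {τ : X → ℝ} (hτ : Measurable τ) {w : ℝ → ℂ}
    (hw : Integrable w) :
    ∫ x, c x * 𝓕 w (τ x) ∂ν = ∫ ξ, w ξ * ∫ x, 𝐞 (-(ξ * τ x)) * c x ∂ν := by
  have integrable_prod :
      Integrable (fun p : X × ℝ ↦ 𝐞 (-(p.2 * τ p.1)) • (c p.1 * w p.2)) (ν.prod volume) := by
    simp only [Circle.smul_def, smul_eq_mul]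
    refine (hc.mul_prod hw).bdd_mul (c := 1) (Measurable.aestronglyMeasurable ?_)
      (.of_forall fun p ↦ (Circle.norm_coe _).le)
    fun_prop
  calc ∫ x, c x * 𝓕 w (τ x) ∂ν
      = ∫ x, (∫ ξ, 𝐞 (-(ξ * τ x)) • (c x * w ξ)) ∂ν := by
        simp_rw [Real.fourier_real_eq, ← integral_const_mul, mul_smul_comm]
    _ = ∫ ξ, ∫ x, 𝐞 (-(ξ * τ x)) • (c x * w ξ) ∂ν := integral_integral_swap integrable_prod
    _ = ∫ ξ, w ξ * ∫ x, 𝐞 (-(ξ * τ x)) * c x ∂ν := by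
        simp_rw [← integral_const_mul, Circle.smul_def, smul_eq_mul]
        congr! 4
        ring

lemma lseriesTerm_add_two_pi_I_mul (f : ℕ → ℂ) (s : ℂ) (ξ : ℝ) (n : ℕ) :
    LSeries.term f (s + 2 * π * Complex.I * ξ) n = 𝐞 (-(ξ * Real.log n)) * LSeries.term f s n := by
  rcases eq_or_ne n 0 with rfl | hn
  · simp
  · have hn' : (n : ℂ) ≠ 0 := Nat.cast_ne_zero.2 hn
    have cpow_eq : (n : ℂ) ^ (2 * π * Complex.I * ξ) = 𝐞 (ξ * Real.log n) := by
      rw [Complex.cpow_def_of_ne_zero hn', Real.fourierChar_apply, ← Complex.natCast_log]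
      push_cast
      ring_nf
    rw [LSeries.term_of_ne_zero hn, LSeries.term_of_ne_zero hn, Complex.cpow_add _ _ hn', cpow_eq,
      AddChar.map_neg_eq_inv, Circle.coe_inv]
    ring

lemma integral_count_eq_tsum {ι E : Type*} [Countable ι] [MeasurableSpace ι]
    [MeasurableSingletonClass ι] [NormedAddCommGroup E] [NormedSpace ℝ E] [FiniteDimensional ℝ E]
    (h : ι → E) : ∫ i, h i ∂Measure.count = ∑' i, h i := by
  have := FiniteDimensional.complete ℝ E
  by_cases hh : Summable h
  · simp [integral_countable (integrable_count_iff.2 (summable_norm_iff.2 hh))]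
  · rw [tsum_eq_zero_of_not_summable hh,
      integral_undef fun hi ↦ hh (summable_norm_iff.1 (integrable_count_iff.1 hi))]

lemma tsum_term_mul_fourier_log_sub {f : ℕ → ℂ} {s : ℂ} (hs : LSeriesSummable f s) {w : ℝ → ℂ}
    (hw : Integrable w) (u : ℝ) :
    ∑' n, LSeries.term f s n * 𝓕 w (Real.log n - u) =
      ∫ ξ, 𝐞 (ξ * u) * w ξ * LSeries f (s + 2 * π * Complex.I * ξ) := by
  rw [← integral_count_eq_tsum, integral_mul_fourier_comp (τ := fun n : ℕ ↦ Real.log n - u)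
    (integrable_count_iff.2 hs.norm) (measurable_of_countable _) hw]
  congr 1 with ξ
  have char_mul (n : ℕ) : (𝐞 (-(ξ * (Real.log n - u))) : ℂ) * LSeries.term f s n =
      𝐞 (ξ * u) * LSeries.term f (s + 2 * π * Complex.I * ξ) n := by
    rw [lseriesTerm_add_two_pi_I_mul, mul_sub, neg_sub, sub_eq_add_neg,
      AddChar.map_add_eq_mul, Circle.coe_mul, mul_assoc]
  simp_rw [char_mul]
  rw [integral_const_mul, integral_count_eq_tsum, LSeries]
  ring

lemma integral_exp_mul_fourier_sub {s : ℂ} (hs : 0 < s.re) {w : ℝ → ℂ} (hw : Integrable w)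
    (u : ℝ) :
    ∫ t in Set.Ioi (0 : ℝ), Complex.exp (-s * t) * 𝓕 w (t - u) =
      ∫ ξ, 𝐞 (ξ * u) * w ξ / (s + 2 * π * Complex.I * ξ) := by
  rw [integral_mul_fourier_comp (integrableOn_exp_mul_complex_Ioi (by simpa) 0) (by fun_prop) hw]
  congr 1 with ξ
  have neg_re : (-(s + 2 * π * Complex.I * ξ)).re < 0 := by simpa using hs
  have char_mul (t : ℝ) : (𝐞 (-(ξ * (t - u))) : ℂ) * Complex.exp (-s * t) =
      𝐞 (ξ * u) * Complex.exp (-(s + 2 * π * Complex.I * ξ) * t) := by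
    simp only [Real.fourierChar_apply, ← Complex.exp_add]
    push_cast
    ring_nf
  simp_rw [char_mul]
  rw [integral_const_mul, integral_exp_mul_complex_Ioi neg_re]
  simp only [Complex.ofReal_zero, mul_zero, Complex.exp_zero]
  rw [neg_div_neg_eq]
  ring

lemma tendsto_integral_exp_mul {f : ℝ → ℂ} (hf : Integrable f) :
    Tendsto (fun δ : ℝ ↦ ∫ t in Set.Ioi (0 : ℝ), Complex.exp (-δ * t) * f t) (𝓝[>] 0)
      (𝓝 (∫ t in Set.Ioi (0 : ℝ), f t)) := by
  refine tendsto_integral_filter_of_dominated_convergence (fun t ↦ ‖f t‖) ?_ ?_ hf.norm.restrict ?_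
  · exact .of_forall fun δ ↦ Continuous.aestronglyMeasurable (by fun_prop) |>.mul hf.1.restrict
  · filter_upwards [self_mem_nhdsWithin] with δ (hδ : 0 < δ)
    filter_upwards [ae_restrict_mem measurableSet_Ioi] with t (ht : 0 < t)
    rw [norm_mul, Complex.norm_exp]
    refine mul_le_of_le_one_left (norm_nonneg _) (Real.exp_le_one_iff.2 ?_)
    simpa using (mul_pos hδ ht).le
  · refine .of_forall fun t ↦ ?_
    have : Continuous fun δ : ℝ ↦ Complex.exp (-δ * t) * f t := by fun_prop
    simpa using (this.tendsto 0).mono_left nhdsWithin_le_nhds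

lemma tendsto_integral_Ioi_comp_sub {f : ℝ → ℂ} (hf : Integrable f) :
    Tendsto (fun u : ℝ ↦ ∫ t in Set.Ioi (0 : ℝ), f (t - u)) atTop (𝓝 (∫ t, f t)) := by
  have shift (u : ℝ) : ∫ t in Set.Ioi (0 : ℝ), f (t - u) = ∫ t in Set.Ioi (-u), f t := by
    have preimage_eq : (· - u) ⁻¹' Set.Ioi (-u) = Set.Ioi 0 := by simp
    rw [← preimage_eq, (measurePreserving_sub_right volume u).setIntegral_preimage_emb
      (MeasurableEquiv.subRight u).measurableEmbedding]
  simp_rw [shift]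
  exact (aecover_Ioi tendsto_neg_atTop_atBot).integral_tendsto_of_countably_generated hf

lemma tendsto_integral_fourierChar_mul_atTop (h : ℝ → ℂ) :
    Tendsto (fun u : ℝ ↦ ∫ ξ, 𝐞 (ξ * u) * h ξ) atTop (𝓝 0) := by
  have neg_tendsto : Tendsto (fun u : ℝ ↦ -u) atTop (cocompact ℝ) :=
    tendsto_neg_atTop_atBot.mono_right atBot_le_cocompact
  simpa [Function.comp_def, Circle.smul_def] using
    (Real.tendsto_integral_exp_smul_cocompact h).comp neg_tendsto

section WienerIkehara

variable {f : ℕ → ℂ} {A : ℂ} {G : ℂ → ℂ} {w : 𝓢(ℝ, ℂ)}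

lemma integrable_fourierChar_mul (w_supp : HasCompactSupport w) (u : ℝ) {h : ℝ → ℂ}
    (hh : Continuous h) : Integrable fun ξ ↦ 𝐞 (ξ * u) * w ξ * h ξ :=
  Continuous.integrable_of_hasCompactSupport (by fun_prop) w_supp.mul_left.mul_right

lemma tsum_term_mul_fourier_eq_add (abscissa_le : LSeries.abscissaOfAbsConv f ≤ 1)
    (G_cont : ContinuousOn G {s | 1 ≤ s.re})
    (G_eq : Set.EqOn G (fun s ↦ LSeries f s - A / (s - 1)) {s | 1 < s.re})
    (w_supp : HasCompactSupport w) {δ : ℝ} (hδ : 0 < δ) (u : ℝ) :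
    ∑' n, LSeries.term f (1 + δ) n * 𝓕 w (Real.log n - u) =
      A * (∫ t in Set.Ioi (0 : ℝ), Complex.exp (-δ * t) * 𝓕 w (t - u)) +
        ∫ ξ, 𝐞 (ξ * u) * w ξ * G (1 + δ + 2 * π * Complex.I * ξ) := by
  have summable : LSeriesSummable f (1 + δ) :=
    LSeriesSummable_of_abscissaOfAbsConv_lt_re <| abscissa_le.trans_lt <| by
      norm_cast; linarith
  have L_eq (ξ : ℝ) : LSeries f (1 + δ + 2 * π * Complex.I * ξ) =
      A / (δ + 2 * π * Complex.I * ξ) + G (1 + δ + 2 * π * Complex.I * ξ) := by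
    rw [G_eq (by simpa using hδ)]
    ring_nf
  have denom_ne_zero (ξ : ℝ) : δ + 2 * π * Complex.I * ξ ≠ 0 := fun h ↦
    hδ.ne' (by simpa using congr_arg Complex.re h)
  have pole_cont : Continuous fun ξ : ℝ ↦ A / (δ + 2 * π * Complex.I * ξ) :=
    continuous_const.div (by fun_prop) denom_ne_zero
  have G_line_cont : Continuous fun ξ : ℝ ↦ G (1 + δ + 2 * π * Complex.I * ξ) :=
    G_cont.comp_continuous (by fun_prop) fun ξ ↦ by simpa using hδ.le
  rw [fourier_coe, tsum_term_mul_fourier_log_sub summable w.integrable,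
    integral_exp_mul_fourier_sub (by simpa) w.integrable, ← integral_const_mul]
  simp_rw [L_eq, mul_add]
  rw [integral_add (integrable_fourierChar_mul w_supp u pole_cont)
    (integrable_fourierChar_mul w_supp u G_line_cont)]
  congr! 3
  ring

lemma tendsto_integral_fourierChar_mul (w_supp : HasCompactSupport w)
    (G_cont : ContinuousOn G {s | 1 ≤ s.re}) (u : ℝ) :
    Tendsto (fun δ : ℝ ↦ ∫ ξ, 𝐞 (ξ * u) * w ξ * G (1 + δ + 2 * π * Complex.I * ξ)) (𝓝[>] 0)
      (𝓝 (∫ ξ, 𝐞 (ξ * u) * w ξ * G (1 + 2 * π * Complex.I * ξ))) := by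
  have cont : ContinuousOn
      (fun δ : ℝ ↦ ∫ ξ, 𝐞 (ξ * u) * w ξ * G (1 + δ + 2 * π * Complex.I * ξ)) (Set.Ici 0) := by
    refine continuousOn_integral_of_compact_support w_supp ?_ fun δ ξ _ hξ ↦ by
      simp [image_eq_zero_of_notMem_tsupport hξ]
    refine ContinuousOn.mul (by fun_prop) (G_cont.comp (by fun_prop) fun p hp ↦ ?_)
    simpa using hp.1
  simpa using (cont 0 Set.self_mem_Ici).mono_left (nhdsWithin_mono _ Set.Ioi_subset_Ici_self)

/-- The limit as `δ → 0⁺` of the smoothed Dirichlet sum `∑ f(n) n^{-1-δ} 𝓕w(log n - u)`, when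
`L(f, s) = A / (s - 1) + G(s)` with `G` continuous on `1 ≤ re s`. -/
noncomputable def smoothedSumLimit (A : ℂ) (G : ℂ → ℂ) (w : 𝓢(ℝ, ℂ)) (u : ℝ) : ℂ :=
  A * (∫ t in Set.Ioi (0 : ℝ), 𝓕 w (t - u)) +
    ∫ ξ, 𝐞 (ξ * u) * w ξ * G (1 + 2 * π * Complex.I * ξ)

lemma tendsto_tsum_term_mul_fourier (abscissa_le : LSeries.abscissaOfAbsConv f ≤ 1)
    (G_cont : ContinuousOn G {s | 1 ≤ s.re})
    (G_eq : Set.EqOn G (fun s ↦ LSeries f s - A / (s - 1)) {s | 1 < s.re})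
    (w_supp : HasCompactSupport w) (u : ℝ) :
    Tendsto (fun δ : ℝ ↦ ∑' n, LSeries.term f (1 + δ) n * 𝓕 w (Real.log n - u)) (𝓝[>] 0)
      (𝓝 (smoothedSumLimit A G w u)) := by
  refine Tendsto.congr' ?_ (((tendsto_integral_exp_mul
    ((𝓕 w).integrable.comp_sub_right u)).const_mul A).add
    (tendsto_integral_fourierChar_mul w_supp G_cont u))
  filter_upwards [self_mem_nhdsWithin] with δ hδ
  exact (tsum_term_mul_fourier_eq_add abscissa_le G_cont G_eq w_supp hδ u).symm

lemma tendsto_smoothedSumLimit_atTop (A : ℂ) (G : ℂ → ℂ) (w : 𝓢(ℝ, ℂ)) :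
    Tendsto (smoothedSumLimit A G w) atTop (𝓝 (A * w 0)) := by
  have integral_fourier : ∫ t, 𝓕 w t = w 0 := by
    have inversion : 𝓕⁻ (𝓕 w) = w := fourierInv_fourier_eq w
    conv_rhs => rw [← inversion, fourierInv_coe, Real.fourierInv_eq]
    simp
  have := ((tendsto_integral_Ioi_comp_sub (𝓕 w).integrable).const_mul A).add
    (tendsto_integral_fourierChar_mul_atTop fun ξ ↦ w ξ * G (1 + 2 * π * Complex.I * ξ))
  simpa only [integral_fourier, add_zero, ← mul_assoc] using! this

lemma exists_re_pos_of_tsum_re_pos {ι : Type*} {z : ι → ℂ} (hz : 0 < (∑' i, z i).re) :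
    ∃ i, 0 < (z i).re := by
  contrapose! hz
  by_cases summable : Summable z
  · exact (Complex.re_tsum summable).trans_le (tsum_nonpos hz)
  · simp [tsum_eq_zero_of_not_summable summable]

theorem eventually_exists_abs_log_sub_lt (f_nonneg : ∀ n, 0 ≤ f n) {A : ℝ} (A_pos : 0 < A)
    (abscissa_le : LSeries.abscissaOfAbsConv f ≤ 1) (G_cont : ContinuousOn G {s | 1 ≤ s.re})
    (G_eq : Set.EqOn G (fun s ↦ LSeries f s - A / (s - 1)) {s | 1 < s.re}) {η : ℝ} (hη : 0 < η) :
    ∀ᶠ u in atTop, ∃ n, f n ≠ 0 ∧ |Real.log n - u| < η := by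
  obtain ⟨w, w_supp, w_zero, w_fourier⟩ := exists_schwartzMap_fourier_nonpos_of_le_abs hη
  have lim_pos : 0 < (A * w 0).re := by simpa using mul_pos A_pos w_zero
  filter_upwards [(Complex.continuous_re.tendsto _).comp (tendsto_smoothedSumLimit_atTop A G w)
    |>.eventually_const_lt lim_pos] with u hu
  obtain ⟨δ, sum_pos⟩ := (Complex.continuous_re.tendsto _).comp
    (tendsto_tsum_term_mul_fourier abscissa_le G_cont G_eq w_supp u)
    |>.eventually_const_lt hu |>.exists
  obtain ⟨n, hn⟩ := exists_re_pos_of_tsum_re_pos sum_pos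
  have term_nonneg : 0 ≤ LSeries.term f (1 + δ) n := by
    exact_mod_cast LSeries.term_nonneg (f_nonneg n) (1 + δ)
  obtain ⟨re_nonneg, im_eq_zero⟩ := Complex.nonneg_iff.1 term_nonneg
  rw [Complex.mul_re, ← im_eq_zero, zero_mul, sub_zero] at hn
  refine ⟨n, fun f_eq_zero ↦ ?_, lt_of_not_ge fun h ↦ ?_⟩
  · simp [LSeries.term_def, f_eq_zero] at hn
  · exact hn.not_ge (mul_nonpos_of_nonneg_of_nonpos re_nonneg (w_fourier _ h))

end WienerIkehara

theorem eventually_exists_isPrimePow_zmod_eq {q : ℕ} [NeZero q] {a : ZMod q} (ha : IsUnit a) {ε : ℝ}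
    (hε : 0 < ε) :
    ∀ᶠ x : ℝ in atTop, ∃ n : ℕ, IsPrimePow n ∧ (n : ZMod q) = a ∧ x ≤ n ∧ n ≤ (1 + ε) * x := by
  have log_pos : 0 < Real.log (1 + ε) / 2 := half_pos (Real.log_pos (by linarith))
  have windows := eventually_exists_abs_log_sub_lt
    (fun n ↦ by exact_mod_cast residueClass_nonneg a n)
    (A := (q.totient : ℝ)⁻¹) (by simpa using Nat.totient_pos.2 (NeZero.pos q))
    (abscissaOfAbsConv_residueClass_le_one a)
    (continuousOn_LFunctionResidueClassAux a)
    (by simpa using eqOn_LFunctionResidueClassAux ha) log_pos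
  have center_tendsto := tendsto_log_atTop.atTop_add
    (tendsto_const_nhds (x := Real.log (1 + ε) / 2))
  filter_upwards [center_tendsto.eventually windows, eventually_gt_atTop 0]
    with x ⟨n, coeff_ne_zero, hn⟩ x_pos
  obtain ⟨n_eq, vonMangoldt_ne_zero⟩ :
      (n : ZMod q) = a ∧ ArithmeticFunction.vonMangoldt n ≠ 0 := by
    simpa [residueClass, Set.indicator_apply] using coeff_ne_zero
  have n_primePow : IsPrimePow n :=
    ArithmeticFunction.vonMangoldt_ne_zero_iff.1 vonMangoldt_ne_zero
  have n_pos : (0 : ℝ) < n := by exact_mod_cast n_primePow.pos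
  obtain ⟨lower, upper⟩ := abs_lt.1 hn
  refine ⟨n, n_primePow, n_eq, (Real.log_le_log_iff x_pos n_pos).1 (by linarith),
    (Real.log_le_log_iff n_pos (by positivity)).1 ?_⟩
  rw [Real.log_mul (by positivity) x_pos.ne']
  linarith

end PrimePowers

section BergeCycle

open Finset

variable {V : Type*} {ℓ : ℕ} {E : Finset (Finset V)}

/-- The hypergraph with edge set `E` contains a Berge cycle of length `ℓ`; unlike `IsBergeCycle`,
`E` may have further edges, and the vertex type is arbitrary. -/
def HasBergeCycle (ℓ : ℕ) (E : Finset (Finset V)) : Prop :=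
  ∃ (v : ZMod ℓ → V) (e : ZMod ℓ → Finset V), v.Injective ∧ e.Injective ∧
    ∀ i, e i ∈ E ∧ v i ∈ e i ∧ v (i + 1) ∈ e i

lemma hasBergeCycle_two_iff :
    HasBergeCycle 2 E ↔
      ∃ e ∈ E, ∃ f ∈ E, e ≠ f ∧ ∃ x y, x ≠ y ∧ x ∈ e ∧ y ∈ e ∧ x ∈ f ∧ y ∈ f := by
  constructor
  · rintro ⟨v, e, v_inj, e_inj, mem⟩
    exact ⟨e 0, (mem 0).1, e 1, (mem 1).1, e_inj.ne zero_ne_one, v 0, v 1, v_inj.ne zero_ne_one,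
      (mem 0).2.1, (mem 0).2.2, (mem 1).2.2, (mem 1).2.1⟩
  · rintro ⟨e, he, f, hf, hef, x, y, hxy, hxe, hye, hxf, hyf⟩
    refine ⟨![x, y], ![e, f], ?_, ?_, ?_⟩
    · exact List.nodup_ofFn.1 (by simpa)
    · exact List.nodup_ofFn.1 (by simpa)
    · exact Fin.forall_fin_two.2 ⟨⟨he, hxe, hye⟩, ⟨hf, hyf, hxf⟩⟩

lemma hasBergeCycle_four_of_nodup {a b c d : V} {e f g h : Finset V}
    (vertices : [a, b, c, d].Nodup) (edges : [e, f, g, h].Nodup)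
    (he : e ∈ E ∧ a ∈ e ∧ b ∈ e) (hf : f ∈ E ∧ b ∈ f ∧ c ∈ f)
    (hg : g ∈ E ∧ c ∈ g ∧ d ∈ g) (hh : h ∈ E ∧ d ∈ h ∧ a ∈ h) : HasBergeCycle 4 E := by
  refine ⟨![a, b, c, d], ![e, f, g, h], ?_, ?_, ?_⟩
  · exact List.nodup_ofFn.1 (by simpa using vertices)
  · exact List.nodup_ofFn.1 (by simpa using edges)
  · intro i
    fin_cases i
    exacts [he, hf, hg, hh]

lemma eq_of_mem_of_mem (linear : ¬HasBergeCycle 2 E) {x y : V} {e f : Finset V}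
    (he : e ∈ E) (hf : f ∈ E) (hxy : x ≠ y) (hxe : x ∈ e) (hye : y ∈ e) (hxf : x ∈ f)
    (hyf : y ∈ f) : e = f :=
  by_contra fun hef ↦ linear <|
    hasBergeCycle_two_iff.2 ⟨e, he, f, hf, hef, x, y, hxy, hxe, hye, hxf, hyf⟩

/-- The vertices `a`, `b`, `c`, which need not be distinct, lie in a common edge. -/
def InCommonEdge (E : Finset (Finset V)) (a b c : V) : Prop :=
  ∃ e ∈ E, a ∈ e ∧ b ∈ e ∧ c ∈ e

instance [DecidableEq V] {a b c : V} : Decidable (InCommonEdge E a b c) :=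
  inferInstanceAs <| Decidable (∃ e ∈ E, a ∈ e ∧ b ∈ e ∧ c ∈ e)

lemma InCommonEdge.swap_right {a b c : V} : InCommonEdge E a b c → InCommonEdge E a c b := by
  rintro ⟨e, he, ha, hb, hc⟩
  exact ⟨e, he, ha, hc, hb⟩

lemma InCommonEdge.swap_ends {a b c : V} : InCommonEdge E a b c → InCommonEdge E c b a := by
  rintro ⟨e, he, ha, hb, hc⟩
  exact ⟨e, he, hc, hb, ha⟩

lemma eq_of_inCommonEdge (uniform : ∀ e ∈ E, #e = 3) (linear : ¬HasBergeCycle 2 E)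
    {a x y z : V} (hax : a ≠ x) (hay : a ≠ y) (haz : a ≠ z) (hxy : x ≠ y) (hxz : x ≠ z)
    (axy : InCommonEdge E a x y) (axz : InCommonEdge E a x z) : y = z := by
  classical
  obtain ⟨e, he, hae, hxe, hye⟩ := axy
  obtain ⟨f, hf, haf, hxf, hzf⟩ := axz
  obtain rfl := eq_of_mem_of_mem linear he hf hax hae hxe haf hxf
  by_contra hyz
  have four_le : #({a, x, y, z} : Finset V) ≤ #e :=
    card_le_card (by simp [insert_subset_iff, *])
  rw [uniform e he] at four_le
  grind

end BergeCycle

section Linear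

open Finset

variable {V : Type*} [DecidableEq V] {E : Finset (Finset V)} {a b w x y z : V}

/-- The vertices sharing an edge with `w`. -/
def coNeighbors (E : Finset (Finset V)) (w : V) : Finset V :=
  {e ∈ E | w ∈ e}.biUnion fun e ↦ e.erase w

/-- The midpoints of the paths `a, w, b` whose three vertices do not lie in a common edge. -/
def bergeMidpoints (E : Finset (Finset V)) (a b : V) : Finset V :=
  {w ∈ coNeighbors E a ∩ coNeighbors E b | ¬InCommonEdge E a w b}

lemma mem_coNeighbors : x ∈ coNeighbors E w ↔ x ≠ w ∧ ∃ e ∈ E, w ∈ e ∧ x ∈ e := by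
  simp only [coNeighbors, mem_biUnion, mem_filter, mem_erase]
  tauto

lemma mem_bergeMidpoints :
    w ∈ bergeMidpoints E a b ↔
      w ∈ coNeighbors E a ∧ w ∈ coNeighbors E b ∧ ¬InCommonEdge E a w b := by
  rw [bergeMidpoints, mem_filter, mem_inter, and_assoc]

lemma bergeMidpoints_comm : bergeMidpoints E a b = bergeMidpoints E b a := by
  ext w
  rw [mem_bergeMidpoints, mem_bergeMidpoints, and_left_comm]
  exact and_congr_right' (and_congr_right' (not_congr ⟨.swap_ends, .swap_ends⟩))

lemma exists_edge_of_mem_bergeMidpoints (berge_four : ¬HasBergeCycle 4 E)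
    (hx : x ∈ bergeMidpoints E a b) (hy : y ∈ bergeMidpoints E a b) (hxy : x ≠ y) :
    InCommonEdge E a x y ∨ InCommonEdge E b x y := by
  simp only [mem_bergeMidpoints, mem_coNeighbors] at hx hy
  obtain ⟨⟨hxa, e, he⟩, ⟨hxb, f, hf⟩, x_rainbow⟩ := hx
  obtain ⟨⟨hya, h, hh⟩, ⟨hyb, g, hg⟩, y_rainbow⟩ := hy
  by_contra! no_edge
  simp only [InCommonEdge] at *
  refine berge_four (hasBergeCycle_four_of_nodup (a := a) (b := x) (c := b) (d := y)
    (e := e) (f := f) (g := g) (h := h) ?_ ?_ ?_ ?_ ?_ ?_) <;> grind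

lemma card_bergeMidpoints_le_two (uniform : ∀ e ∈ E, #e = 3) (linear : ¬HasBergeCycle 2 E)
    (berge_four : ¬HasBergeCycle 4 E) (a b : V) : #(bergeMidpoints E a b) ≤ 2 := by
  by_contra! two_lt
  obtain ⟨x, hx, y, hy, z, hz, hxy, hxz, hyz⟩ := two_lt_card.1 two_lt
  have ne_ends {w : V} (hw : w ∈ bergeMidpoints E a b) : a ≠ w ∧ b ≠ w := by
    simp only [mem_bergeMidpoints, mem_coNeighbors] at hw
    exact ⟨hw.1.1.symm, hw.2.1.1.symm⟩
  have := ne_ends hx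
  have := ne_ends hy
  have := ne_ends hz
  have := @InCommonEdge.swap_right V E
  have := @eq_of_inCommonEdge V E uniform linear
  have := exists_edge_of_mem_bergeMidpoints berge_four hx hy hxy
  have := exists_edge_of_mem_bergeMidpoints berge_four hx hz hxz
  have := exists_edge_of_mem_bergeMidpoints berge_four hy hz hyz
  clear hx hy hz two_lt uniform
  grind

lemma mem_bergeMidpoints_endpoints (linear : ¬HasBergeCycle 2 E) {e : Finset V} (he : e ∈ E)
    (hxy : x ≠ y) (hae : a ∈ e) (hxe : x ∈ e) (hye : y ∈ e) (hx : x ∈ bergeMidpoints E a b)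
    (hy : y ∈ bergeMidpoints E a b) :
    (a, b) ∈ (e \ {x, y}) ×ˢ bergeMidpoints E x y := by
  have only_edge {f : Finset V} (hf : f ∈ E) (hxf : x ∈ f) (hyf : y ∈ f) : f = e :=
    eq_of_mem_of_mem linear hf he hxy hxf hyf hxe hye
  simp only [mem_bergeMidpoints, mem_coNeighbors, mem_product, mem_sdiff, mem_insert,
    mem_singleton, InCommonEdge] at hx hy ⊢
  grind

/-- The pairs consisting of the third vertex of an edge through two vertices `x` and `y`, and a
midpoint of `x` and `y`; up to order, these are the only pairs with several midpoints. -/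
def thirdVertexPairs (E : Finset (Finset V)) : Finset (V × V) :=
  E.biUnion fun e ↦ e.offDiag.biUnion fun u ↦ (e \ {u.1, u.2}) ×ˢ bergeMidpoints E u.1 u.2

lemma mem_thirdVertexPairs_of_two_le_card (linear : ¬HasBergeCycle 2 E)
    (berge_four : ¬HasBergeCycle 4 E) (two_le : 2 ≤ #(bergeMidpoints E a b)) :
    (a, b) ∈ thirdVertexPairs E ∨ (b, a) ∈ thirdVertexPairs E := by
  obtain ⟨x, hx, y, hy, hxy⟩ := one_lt_card.1 two_le
  simp only [thirdVertexPairs, mem_biUnion]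
  rcases exists_edge_of_mem_bergeMidpoints berge_four hx hy hxy with
    ⟨e, he, hae, hxe, hye⟩ | ⟨e, he, hbe, hxe, hye⟩
  · exact .inl ⟨e, he, (x, y), mem_offDiag.2 ⟨hxe, hye, hxy⟩,
      mem_bergeMidpoints_endpoints linear he hxy hae hxe hye hx hy⟩
  · rw [bergeMidpoints_comm] at hx hy
    exact .inr ⟨e, he, (x, y), mem_offDiag.2 ⟨hxe, hye, hxy⟩,
      mem_bergeMidpoints_endpoints linear he hxy hbe hxe hye hx hy⟩

lemma card_thirdVertexPairs_le (uniform : ∀ e ∈ E, #e = 3) (linear : ¬HasBergeCycle 2 E)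
    (berge_four : ¬HasBergeCycle 4 E) : #(thirdVertexPairs E) ≤ #E * 12 := by
  refine card_biUnion_le_card_mul _ _ _ fun e he ↦ ?_
  have card_offDiag : #e.offDiag = 6 := by rw [offDiag_card, uniform e he]
  refine (card_biUnion_le_card_mul _ _ 2 fun u hu ↦ ?_).trans_eq (by rw [card_offDiag])
  rw [mem_offDiag] at hu
  have card_third : #(e \ {u.1, u.2}) = 1 := by
    rw [card_sdiff_of_subset (by simp [insert_subset_iff, hu]), uniform e he, card_pair hu.2.2]
  rw [card_product, card_third, one_mul]
  exact card_bergeMidpoints_le_two uniform linear berge_four _ _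

lemma sum_card_bergeMidpoints_le [Fintype V] (uniform : ∀ e ∈ E, #e = 3)
    (linear : ¬HasBergeCycle 2 E) (berge_four : ¬HasBergeCycle 4 E) :
    ∑ p : V × V, #(bergeMidpoints E p.1 p.2) ≤ Fintype.card V ^ 2 + 24 * #E := by
  have card_le (p : V × V) : #(bergeMidpoints E p.1 p.2) ≤
      1 + (if p ∈ thirdVertexPairs E then 1 else 0)
        + if p.swap ∈ thirdVertexPairs E then 1 else 0 := by
    have := card_bergeMidpoints_le_two uniform linear berge_four p.1 p.2
    have := mem_thirdVertexPairs_of_two_le_card (a := p.1) (b := p.2) linear berge_four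
    grind
  have sum_swap : ∑ p : V × V, (if p.swap ∈ thirdVertexPairs E then 1 else 0) =
      #(thirdVertexPairs E) :=
    ((Equiv.prodComm V V).sum_comp fun p ↦ if p ∈ thirdVertexPairs E then 1 else 0).trans (by simp)
  calc
    _ ≤ ∑ p : V × V, (1 + (if p ∈ thirdVertexPairs E then 1 else 0)
        + if p.swap ∈ thirdVertexPairs E then 1 else 0) := sum_le_sum fun p _ ↦ card_le p
    _ = Fintype.card V ^ 2 + #(thirdVertexPairs E) + #(thirdVertexPairs E) := by
      rw [sum_add_distrib, sum_add_distrib, sum_swap]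
      simp [sq]
    _ ≤ _ := by linarith [card_thirdVertexPairs_le uniform linear berge_four]

lemma card_coNeighbors (uniform : ∀ e ∈ E, #e = 3) (linear : ¬HasBergeCycle 2 E) (w : V) :
    #(coNeighbors E w) = 2 * #{e ∈ E | w ∈ e} := by
  rw [coNeighbors, card_biUnion, sum_const_nat (m := 2), mul_comm]
  · intro e he
    rw [mem_filter] at he
    rw [card_erase_of_mem he.2, uniform e he.1]
  · intro e he f hf hef
    rw [mem_coe, mem_filter] at he hf
    refine disjoint_left.2 fun x hxe hxf ↦ hef ?_
    rw [mem_erase] at hxe hxf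
    exact eq_of_mem_of_mem linear he.1 hf.1 hxe.1 hxe.2 he.2 hxf.2 hf.2

lemma coNeighbors_product_subset [Fintype V] (w : V) :
    coNeighbors E w ×ˢ coNeighbors E w ⊆
      {e ∈ E | w ∈ e}.biUnion (fun e ↦ e.erase w ×ˢ e.erase w) ∪
        ({p | w ∈ bergeMidpoints E p.1 p.2} : Finset (V × V)) := by
  rintro ⟨a, b⟩ hab
  simp only [mem_product, mem_union, mem_biUnion, mem_filter, mem_univ, true_and,
    mem_bergeMidpoints, mem_erase, mem_coNeighbors, InCommonEdge] at hab ⊢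
  grind

lemma four_mul_sq_degree_le [Fintype V] (uniform : ∀ e ∈ E, #e = 3)
    (linear : ¬HasBergeCycle 2 E) (w : V) :
    4 * #{e ∈ E | w ∈ e} ^ 2 ≤
      4 * #{e ∈ E | w ∈ e} + #{p : V × V | w ∈ bergeMidpoints E p.1 p.2} := by
  have card_collinear :
      #({e ∈ E | w ∈ e}.biUnion fun e ↦ e.erase w ×ˢ e.erase w) ≤ #{e ∈ E | w ∈ e} * 4 := by
    refine card_biUnion_le_card_mul _ _ _ fun e he ↦ ?_
    rw [mem_filter] at he
    rw [card_product, card_erase_of_mem he.2, uniform e he.1]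
  have := (card_le_card (coNeighbors_product_subset (E := E) w)).trans (card_union_le _ _)
  rw [card_product, card_coNeighbors uniform linear] at this
  linarith

lemma sum_degree_eq [Fintype V] (uniform : ∀ e ∈ E, #e = 3) :
    ∑ w : V, #{e ∈ E | w ∈ e} = 3 * #E := by
  have := sum_card_bipartiteAbove_eq_sum_card_bipartiteBelow (s := univ) (t := E)
    fun (w : V) e ↦ w ∈ e
  simp only [bipartiteAbove, bipartiteBelow, filter_univ_mem] at this
  rw [this, sum_const_nat uniform, mul_comm]

lemma four_mul_sum_sq_degree_le [Fintype V] (uniform : ∀ e ∈ E, #e = 3)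
    (linear : ¬HasBergeCycle 2 E) (berge_four : ¬HasBergeCycle 4 E) :
    4 * ∑ w : V, #{e ∈ E | w ∈ e} ^ 2 ≤ Fintype.card V ^ 2 + 36 * #E := by
  have double_count : ∑ w : V, #{p : V × V | w ∈ bergeMidpoints E p.1 p.2} =
      ∑ p : V × V, #(bergeMidpoints E p.1 p.2) := by
    have := sum_card_bipartiteAbove_eq_sum_card_bipartiteBelow (s := univ) (t := univ)
      fun (w : V) (p : V × V) ↦ w ∈ bergeMidpoints E p.1 p.2
    simpa only [bipartiteAbove, bipartiteBelow, filter_univ_mem] using this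
  have sum_le := sum_le_sum fun w (_ : w ∈ univ) ↦ four_mul_sq_degree_le uniform linear w
  rw [sum_add_distrib, ← mul_sum, ← mul_sum, sum_degree_eq uniform, double_count] at sum_le
  linarith [sum_card_bergeMidpoints_le uniform linear berge_four]

end Linear

section Bounds

open Finset

lemma thirty_six_mul_sq_card_edges_le {V : Type*} [Fintype V] {E : Finset (Finset V)}
    (uniform : ∀ e ∈ E, #e = 3) (linear : ¬HasBergeCycle 2 E)
    (berge_four : ¬HasBergeCycle 4 E) :
    36 * #E ^ 2 ≤ Fintype.card V * (Fintype.card V ^ 2 + 36 * #E) := by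
  classical
  have cauchy := sq_sum_le_card_mul_sum_sq (s := univ) (f := fun w : V ↦ #{e ∈ E | w ∈ e})
  rw [sum_degree_eq uniform, card_univ] at cauchy
  calc
    36 * #E ^ 2 = 4 * (3 * #E) ^ 2 := by ring
    _ ≤ Fintype.card V * (4 * ∑ w : V, #{e ∈ E | w ∈ e} ^ 2) := by linarith
    _ ≤ _ := by gcongr; exact four_mul_sum_sq_degree_le uniform linear berge_four

-- Were `k ≤ r - 4`, then with `r = s + 4` and `N ≤ B = (s + 4) s` the inequality
-- `x ^ 2 ≤ B ^ 3 + 6 B x` would fail at `x = 6 (r.choose 3)`, hence also for every larger `x`.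
lemma le_add_three_of_sq_le {r k N m : ℕ} (hN : N ≤ r * k) (hm : r.choose 3 ≤ m)
    (h : 36 * m ^ 2 ≤ N * (N ^ 2 + 36 * m)) : r ≤ k + 3 := by
  by_contra! lt
  obtain ⟨s, rfl⟩ := Nat.exists_eq_add_of_le' (show 4 ≤ r by lia)
  have choose_eq : (s + 4) * (s + 3) * (s + 2) = 6 * (s + 4).choose 3 := by
    have := Nat.descFactorial_eq_factorial_mul_choose (s + 4) 3
    simp only [Nat.descFactorial_succ, Nat.descFactorial_zero, Nat.factorial, tsub_zero,
      Nat.reduceSubDiff] at this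
    linarith
  zify at hN hm h lt choose_eq
  set x : ℤ := 6 * m
  set B : ℤ := (s + 4) * s
  set M : ℤ := (s + 4) * (s + 3) * (s + 2)
  have hNB : (N : ℤ) ≤ B := hN.trans (mul_le_mul_of_nonneg_left (by lia) (by positivity))
  have hMx : M ≤ x := by lia
  have sq_le : x ^ 2 ≤ B ^ 3 + 6 * B * x := by
    have : x ^ 2 = 36 * m ^ 2 := by ring
    have : (N : ℤ) * (N ^ 2 + 6 * x) ≤ B * (B ^ 2 + 6 * x) := by gcongr
    linarith
  have sub_eq : M - 6 * B = (s + 4) * (s ^ 2 - s + 6) := by ring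
  have sub_nonneg : 0 ≤ M - 6 * B := by
    rw [sub_eq]
    exact mul_nonneg (by positivity) (by nlinarith [sq_nonneg ((s : ℤ) - 1)])
  have : 0 ≤ M := by positivity
  have lower : M * (M - 6 * B) ≤ x * (x - 6 * B) := by gcongr
  have : M * (M - 6 * B) = B ^ 3 + (s + 4) ^ 2 * (7 * s ^ 2 + 24 * s + 36) := by
    rw [sub_eq]
    ring
  have gap_pos : (0 : ℤ) < (s + 4) ^ 2 * (7 * s ^ 2 + 24 * s + 36) := by positivity
  linarith

end Bounds

section Bridge

open Finset

variable {m ℓ r k N : ℕ} {E : Finset (Finset (Fin N))}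

lemma hasBergeCycle_iff_exists_hypContains [NeZero ℓ] (uniform : IsUniform m E) :
    HasBergeCycle ℓ E ↔ ∃ H ∈ bergeCycles m ℓ, HypContains H.2 E := by
  constructor
  · rintro ⟨v, e, v_inj, e_inj, mem⟩
    refine ⟨⟨N, univ.image e⟩, ⟨?_, v, e, v_inj, e_inj, ?_, ?_, ?_⟩, id, Function.injective_id, ?_⟩
    · exact forall_mem_image.2 fun i _ ↦ uniform _ (mem i).1
    · exact fun i ↦ mem_image_of_mem e (mem_univ i)
    · simp
    · simp [insert_subset_iff, mem]
    · simp [mem]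
  · rintro ⟨H, ⟨-, v, e, v_inj, e_inj, e_mem, -, subset⟩, f, f_inj, image_mem⟩
    refine ⟨f ∘ v, fun i ↦ (e i).image f, f_inj.comp v_inj, (image_injective f_inj).comp e_inj,
      fun i ↦ ⟨image_mem _ (e_mem i), ?_, ?_⟩⟩
    · exact mem_image_of_mem f (subset i (mem_insert_self ..))
    · exact mem_image_of_mem f (subset i (by simp))

lemma forall_not_hypContains_iff (uniform : IsUniform 3 E) :
    (∀ H ∈ bergeCycles 3 2 ∪ bergeCycles 3 4, ¬HypContains H.2 E) ↔
      ¬HasBergeCycle 2 E ∧ ¬HasBergeCycle 4 E := by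
  rw [hasBergeCycle_iff_exists_hypContains uniform, hasBergeCycle_iff_exists_hypContains uniform]
  simp only [Set.mem_union, or_imp, forall_and, not_exists, not_and]

lemma isRKHyper_iff_exists_coloring (uniform : IsUniform m E) :
    IsRKHyper E m r k ↔ ∃ c : Fin N → Fin r, (∀ i, #{v | c v = i} ≤ k) ∧
      ∀ S, #S = m → ∃ e ∈ E, e.image c = S := by
  constructor
  · rintro ⟨P, partition, card_le, transversal⟩
    choose c hc c_unique using partition
    have fiber_eq (i : Fin r) : ({v | c v = i} : Finset (Fin N)) = P i := by
      ext v
      rw [mem_filter_univ]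
      exact ⟨fun h ↦ h ▸ hc v, fun h ↦ (c_unique v i h).symm⟩
    refine ⟨c, fun i ↦ (fiber_eq i).symm ▸ card_le i, fun S hS ↦ ?_⟩
    obtain ⟨e, he, card_inter⟩ := transversal S hS
    refine ⟨e, he, (eq_of_subset_of_card_le (fun i hi ↦ ?_) ?_).symm⟩
    · obtain ⟨v, hv⟩ := card_pos.1 ((card_inter i hi).symm ▸ one_pos)
      rw [mem_inter, ← fiber_eq, mem_filter_univ] at hv
      exact mem_image.2 ⟨v, hv⟩
    · exact card_image_le.trans_eq ((uniform e he).trans hS.symm)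
  · rintro ⟨c, card_le, transversal⟩
    refine ⟨fun i ↦ {v | c v = i}, fun v ↦ ⟨c v, by simp⟩, card_le, fun S hS ↦ ?_⟩
    obtain ⟨e, he, rfl⟩ := transversal S hS
    have c_inj : Set.InjOn c e := card_image_iff.1 (hS.trans (uniform e he).symm)
    refine ⟨e, he, forall_mem_image.2 fun v hv ↦ card_eq_one.2 ⟨v, ?_⟩⟩
    ext w
    simp only [mem_inter, mem_filter_univ, mem_singleton]
    exact ⟨fun h ↦ c_inj h.1 hv h.2, by rintro rfl; exact ⟨hv, rfl⟩⟩

lemma choose_le_card_of_isRKHyper (uniform : IsUniform m E) (h : IsRKHyper E m r k) :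
    r.choose m ≤ #E := by
  obtain ⟨c, -, transversal⟩ := (isRKHyper_iff_exists_coloring uniform).1 h
  calc
    r.choose m = #(powersetCard m (univ : Finset (Fin r))) := by simp
    _ ≤ #(E.image (image c)) := card_le_card fun S hS ↦
      mem_image.2 (transversal S (mem_powersetCard_univ.1 hS))
    _ ≤ #E := card_image_le

lemma le_mul_of_isRKHyper (h : IsRKHyper E m r k) : N ≤ r * k := by
  obtain ⟨P, partition, card_le, -⟩ := h
  calc
    N = #(univ.biUnion P) := by
      rw [eq_univ_of_forall fun v ↦ mem_biUnion.2 (by simpa using (partition v).exists), card_fin]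
    _ ≤ #(univ : Finset (Fin r)) * k := card_biUnion_le_card_mul _ _ _ fun i _ ↦ card_le i
    _ = r * k := by rw [card_fin]

end Bridge

section PolarityGraph

open Finset

variable {V W ι F : Type*}

/-- The graph `G` contains no cycle of length four. -/
def NoFourCycle (G : SimpleGraph V) : Prop :=
  ∀ ⦃a b c d⦄, G.Adj a b → G.Adj b c → G.Adj c d → G.Adj d a → a = c ∨ b = d

lemma NoFourCycle.comap {G : SimpleGraph W} (hG : NoFourCycle G) {f : V → W}
    (hf : f.Injective) : NoFourCycle (G.comap f) :=
  fun _ _ _ _ hab hbc hcd hda ↦ (hG hab hbc hcd hda).imp (@hf _ _) (@hf _ _)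

/-- The set of triangles of `G`, as the edge set of a hypergraph. -/
noncomputable def triangles [Fintype V] (G : SimpleGraph V) : Finset (Finset V) :=
  open Classical in G.cliqueFinset 3

lemma mem_triangles [Fintype V] {G : SimpleGraph V} {e : Finset V} :
    e ∈ triangles G ↔ G.IsNClique 3 e := by
  classical
  exact G.mem_cliqueFinset_iff

lemma NoFourCycle.not_hasBergeCycle_two [Fintype V] {G : SimpleGraph V} (hG : NoFourCycle G) :
    ¬HasBergeCycle 2 (triangles G) := by
  rw [hasBergeCycle_two_iff]
  rintro ⟨e, he, f, hf, hef, x, y, hxy, hxe, hye, hxf, hyf⟩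
  rw [mem_triangles] at he hf
  have card_eq : #e = #f := he.card_eq.trans hf.card_eq.symm
  obtain ⟨a, hae, haf⟩ := not_subset.1 fun h ↦ hef (eq_of_subset_of_card_le h card_eq.ge)
  obtain ⟨b, hbf, hbe⟩ := not_subset.1 fun h ↦ hef (eq_of_subset_of_card_le h card_eq.le).symm
  rcases hG (he.isClique hxe hae (ne_of_mem_of_not_mem hxf haf))
    (he.isClique hae hye (ne_of_mem_of_not_mem hyf haf).symm)
    (hf.isClique hyf hbf (ne_of_mem_of_not_mem hye hbe))
    (hf.isClique hbf hxf (ne_of_mem_of_not_mem hxe hbe).symm) with h | rfl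
  · exact hxy h
  · exact haf hbf

lemma NoFourCycle.not_hasBergeCycle_four [Fintype V] {G : SimpleGraph V} (hG : NoFourCycle G) :
    ¬HasBergeCycle 4 (triangles G) := by
  rintro ⟨v, e, v_inj, -, mem⟩
  have adj (i j : ZMod 4) (hij : i + 1 = j) (hne : i ≠ j) : G.Adj (v i) (v j) := by
    subst hij
    exact (mem_triangles.1 (mem i).1).isClique (mem i).2.1 (mem i).2.2 (v_inj.ne hne)
  rcases hG (adj 0 1 rfl (by decide)) (adj 1 2 rfl (by decide)) (adj 2 3 rfl (by decide))
    (adj 3 0 rfl (by decide)) with h | h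
  · exact absurd (v_inj h) (by decide)
  · exact absurd (v_inj h) (by decide)

/-- The multipartite graph with parts `{i} × F` in which `(i, x)` and `(j, y)` are adjacent when
`x + y = t i * t j`. For injective `t` it is a subgraph of the Erdős–Rényi polarity graph: `(i, x)`
is the point `[1 : t i : x]`, and the form is `x₀ y₂ + x₂ y₀ - x₁ y₁`. -/
def polarityGraph [CommRing F] (t : ι → F) : SimpleGraph (ι × F) where
  Adj p q := p.1 ≠ q.1 ∧ p.2 + q.2 = t p.1 * t q.1
  symm := ⟨fun p q h ↦ ⟨h.1.symm, by rw [add_comm, h.2, mul_comm]⟩⟩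
  loopless := ⟨fun _ h ↦ h.1 rfl⟩

lemma polarityGraph_adj [CommRing F] {t : ι → F} {i j : ι} {x y : F} :
    (polarityGraph t).Adj (i, x) (j, y) ↔ i ≠ j ∧ x + y = t i * t j :=
  .rfl

lemma noFourCycle_polarityGraph [CommRing F] [IsDomain F] {t : ι → F} (ht : t.Injective) :
    NoFourCycle (polarityGraph t) := by
  rintro ⟨i, x⟩ ⟨j, y⟩ ⟨k, z⟩ ⟨l, w⟩ hxy hyz hzw hwx
  obtain ⟨-, hxy⟩ := polarityGraph_adj.1 hxy
  obtain ⟨-, hyz⟩ := polarityGraph_adj.1 hyz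
  obtain ⟨-, hzw⟩ := polarityGraph_adj.1 hzw
  obtain ⟨-, hwx⟩ := polarityGraph_adj.1 hwx
  have factor : (t i - t k) * (t j - t l) = 0 := by linear_combination hyz + hwx - hxy - hzw
  rcases mul_eq_zero.1 factor with h | h
  · obtain rfl := ht (sub_eq_zero.1 h)
    exact .inl (Prod.ext rfl (by linear_combination hxy - hyz))
  · obtain rfl := ht (sub_eq_zero.1 h)
    exact .inr (Prod.ext rfl (by linear_combination hyz - hzw))

lemma exists_triangle_polarityGraph [Field F] (two_ne_zero : (2 : F) ≠ 0) (t : ι → F) {i j k : ι}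
    (hij : i ≠ j) (hik : i ≠ k) (hjk : j ≠ k) :
    ∃ x y z, (polarityGraph t).Adj (i, x) (j, y) ∧ (polarityGraph t).Adj (i, x) (k, z) ∧
      (polarityGraph t).Adj (j, y) (k, z) := by
  simp only [polarityGraph_adj]
  refine ⟨(t i * t j + t i * t k - t j * t k) / 2, (t j * t i + t j * t k - t i * t k) / 2,
    (t k * t i + t k * t j - t i * t j) / 2, ⟨hij, ?_⟩, ⟨hik, ?_⟩, ⟨hjk, ?_⟩⟩ <;>
  · field_simp
    ring

lemma exists_triangle_comap_polarityGraph [Field F] (two_ne_zero : (2 : F) ≠ 0) {t : ι → F}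
    [Fintype V] [DecidableEq ι] (φ : V ≃ ι × F) {S : Finset ι} (hS : #S = 3) :
    ∃ e ∈ triangles ((polarityGraph t).comap φ), e.image (fun v ↦ (φ v).1) = S := by
  classical
  obtain ⟨i, j, k, hij, hik, hjk, rfl⟩ := card_eq_three.1 hS
  obtain ⟨x, y, z, hxy, hxz, hyz⟩ := exists_triangle_polarityGraph two_ne_zero t hij hik hjk
  refine ⟨{φ.symm (i, x), φ.symm (j, y), φ.symm (k, z)}, mem_triangles.2 ?_, by simp⟩
  exact SimpleGraph.is3Clique_triple_iff.2 (by simp [hxy, hxz, hyz])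

end PolarityGraph

section Admissible

open Finset

/-- Some 3-uniform `(r, k)`-hypergraph has no Berge cycle of length 2 or 4, so that
`f_3(r, {𝒞_2, 𝒞_4})` is the least `k` with this property. -/
def AdmitsBergeFree (r k : ℕ) : Prop :=
  ∃ (N : ℕ) (E : Finset (Finset (Fin N))), IsUniform 3 E ∧
    (¬HasBergeCycle 2 E ∧ ¬HasBergeCycle 4 E) ∧ IsRKHyper E 3 r k

lemma fHyper_bergeCycles_eq_sInf (r : ℕ) :
    fHyper 3 r (bergeCycles 3 2 ∪ bergeCycles 3 4) = sInf {k | AdmitsBergeFree r k} := by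
  refine congrArg sInf (Set.ext fun k ↦ exists_congr fun N ↦ exists_congr fun E ↦ ?_)
  exact and_congr_right fun uniform ↦ and_congr_left' (forall_not_hypContains_iff uniform)

lemma AdmitsBergeFree.le_add_three {r k : ℕ} (h : AdmitsBergeFree r k) : r ≤ k + 3 := by
  obtain ⟨N, E, uniform, ⟨linear, berge_four⟩, hE⟩ := h
  refine le_add_three_of_sq_le (le_mul_of_isRKHyper hE)
    (choose_le_card_of_isRKHyper uniform hE) ?_
  simpa using thirty_six_mul_sq_card_edges_le uniform linear berge_four

lemma admitsBergeFree_card {F : Type*} [Field F] [Fintype F] (two_ne_zero : (2 : F) ≠ 0) {r : ℕ}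
    (hr : r ≤ Fintype.card F) : AdmitsBergeFree r (Fintype.card F) := by
  obtain ⟨t⟩ : Nonempty (Fin r ↪ F) := Function.Embedding.nonempty_of_card_le (by simpa)
  let φ := (Fintype.equivFin (Fin r × F)).symm
  have no_four_cycle : NoFourCycle ((polarityGraph t).comap φ) :=
    (noFourCycle_polarityGraph t.injective).comap φ.injective
  have uniform : IsUniform 3 (triangles ((polarityGraph t).comap φ)) :=
    fun e he ↦ (mem_triangles.1 he).card_eq
  refine ⟨_, _, uniform,
    ⟨no_four_cycle.not_hasBergeCycle_two, no_four_cycle.not_hasBergeCycle_four⟩,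
    (isRKHyper_iff_exists_coloring uniform).2 ⟨fun v ↦ (φ v).1, fun i ↦ ?_,
      fun S hS ↦ exists_triangle_comap_polarityGraph two_ne_zero φ hS⟩⟩
  refine card_le_card_of_injOn (fun v ↦ (φ v).2) (fun _ _ ↦ mem_univ _) fun v hv w hw hvw ↦ ?_
  simp only [coe_filter, mem_univ, true_and, Set.mem_ofPred_eq] at hv hw
  exact φ.injective (Prod.ext (hv.trans hw.symm) hvw)

lemma admitsBergeFree_of_isPrimePow {q r : ℕ} (hq : IsPrimePow q) (odd : Odd q) (hr : r ≤ q) :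
    AdmitsBergeFree r q := by
  rw [← Fintype.card_fin q] at hq hr odd ⊢
  obtain ⟨_⟩ := Fintype.nonempty_field_iff.2 hq
  refine admitsBergeFree_card (Ring.two_ne_zero fun char_two ↦ ?_) hr
  exact Nat.not_even_iff_odd.2 odd
    (Nat.even_iff.2 (FiniteField.even_card_iff_char_two.1 char_two))

lemma fHyper_bergeCycles_le {q r : ℕ} (hq : IsPrimePow q) (odd : Odd q) (hr : r ≤ q) :
    fHyper 3 r (bergeCycles 3 2 ∪ bergeCycles 3 4) ≤ q := by
  rw [fHyper_bergeCycles_eq_sInf]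
  exact Nat.sInf_le (admitsBergeFree_of_isPrimePow hq odd hr)

lemma le_fHyper_bergeCycles_add_three (r : ℕ) :
    r ≤ fHyper 3 r (bergeCycles 3 2 ∪ bergeCycles 3 4) + 3 := by
  obtain ⟨p, le_p, prime⟩ := Nat.exists_infinite_primes (r + 3)
  have odd : Odd p := prime.odd_of_ne_two (by lia)
  have admits : AdmitsBergeFree r p :=
    admitsBergeFree_of_isPrimePow prime.isPrimePow odd (by lia)
  rw [fHyper_bergeCycles_eq_sInf]
  exact (Nat.sInf_mem (s := {k | AdmitsBergeFree r k}) ⟨p, admits⟩).le_add_three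

end Admissible

/-- For every `ε > 0`, for all sufficiently large `r`,
`(1−ε)·r ≤ f_3(r, {𝒞_2^{(3)}, 𝒞_4^{(3)}}) ≤ (1+ε)·r`. -/
theorem stmt9 (ε : ℝ) (hε : 0 < ε) :
    ∃ r₀ : ℕ, ∀ r : ℕ, r₀ ≤ r →
      (1 - ε) * (r : ℝ) ≤ (fHyper 3 r (bergeCycles 3 2 ∪ bergeCycles 3 4) : ℝ) ∧
      (fHyper 3 r (bergeCycles 3 2 ∪ bergeCycles 3 4) : ℝ) ≤ (1 + ε) * (r : ℝ) := by
  obtain ⟨x₀, exists_primePow⟩ := Filter.eventually_atTop.1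
    (eventually_exists_isPrimePow_zmod_eq (q := 2) isUnit_one hε)
  refine ⟨max ⌈x₀⌉₊ ⌈3 / ε⌉₊, fun r hr ↦ ?_⟩
  have x₀_le : x₀ ≤ r := Nat.ceil_le.1 ((le_max_left ..).trans hr)
  have three_le : 3 ≤ r * ε := (div_le_iff₀ hε).1 (Nat.ceil_le.1 ((le_max_right ..).trans hr))
  obtain ⟨q, q_primePow, q_odd, r_le_q, q_le⟩ := exists_primePow r x₀_le
  rw [ZMod.natCast_eq_one_iff_odd] at q_odd
  constructor
  · have lower : (r : ℝ) ≤ fHyper 3 r (bergeCycles 3 2 ∪ bergeCycles 3 4) + 3 := by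
      exact_mod_cast le_fHyper_bergeCycles_add_three r
    linarith
  · have upper := fHyper_bergeCycles_le q_primePow q_odd (Nat.cast_le.1 r_le_q)
    exact (Nat.cast_le.2 upper).trans q_le
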